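/- The twisted duality functor D(H) := Hom(H, ℤ)(1) (the dual object H^∨ followed by Tate twist by 1) sends every object of 𝓗_{1,{0,−1}} to an object of 𝓗_{1,{−1,−2}}, sends every object of 𝓗_{1,{−1,−2}} to an object of 𝓗_{1,{0,−1}}, and D ∘ D is naturally isomorphic to the identity. Hence D induces an anti-equivalence between the categories 𝓗_{1,{0,−1}} and 𝓗_{1,{−1,−2}}. -/

import Mathlib

open TensorProduct

noncomputable section

/-- Raw data underlying an object of the category 𝓗 of
"mixed Hodge structures with additive part". -/
structure HPre where
  /-- the lattice `H_ℤ` -/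
  HZ : Type
  [instHZ : AddCommGroup HZ]
  /-- the `ℂ`-vector space `H_V` -/
  HV : Type
  [instHV : AddCommGroup HV]
  [instHVmod : Module ℂ HV]
  /-- the weight filtration on `H_ℚ := ℚ ⊗ H_ℤ` -/
  WQ : ℤ → Submodule ℚ (ℚ ⊗[ℤ] HZ)
  /-- the weight filtration on `H_V` -/
  WV : ℤ → Submodule ℂ HV
  /-- the Hodge filtration on `H_V` -/
  F : ℤ → Submodule ℂ HV
  /-- the map `a : H_ℂ := ℂ ⊗ H_ℤ → H_V` -/
  a : ℂ ⊗[ℤ] HZ →ₗ[ℂ] HV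
  /-- the map `b : H_V → H_ℂ` -/
  b : HV →ₗ[ℂ] ℂ ⊗[ℤ] HZ

attribute [instance] HPre.instHZ HPre.instHV HPre.instHVmod

/-- The canonical `ℤ`-linear map `ℚ ⊗_ℤ M → ℂ ⊗_ℤ M`. -/
def ratToComplex (M : Type*) [AddCommGroup M] : (ℚ ⊗[ℤ] M) →ₗ[ℤ] (ℂ ⊗[ℤ] M) :=
  LinearMap.rTensor M ((Algebra.linearMap ℚ ℂ).restrictScalars ℤ)

/-- `W_w H_ℂ := ℂ ⊗_ℚ W_w H_ℚ`, realized as the `ℂ`-span in `H_ℂ = ℂ ⊗_ℤ H_ℤ` of the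
image of `W_w H_ℚ`. -/
def HPre.WC (H : HPre) (w : ℤ) : Submodule ℂ (ℂ ⊗[ℤ] H.HZ) :=
  Submodule.span ℂ (ratToComplex H.HZ '' (H.WQ w : Set (ℚ ⊗[ℤ] H.HZ)))

/-- `H` is an object of the category 𝓗. -/
def IsHObj (H : HPre) : Prop :=
  Module.Finite ℤ H.HZ ∧ FiniteDimensional ℂ H.HV ∧
  Monotone H.WQ ∧ Monotone H.WV ∧ Antitone H.F ∧
  (∀ w : ℤ, (H.WC w).map H.a ≤ H.WV w) ∧
  (∀ w : ℤ, (H.WV w).map H.b ≤ H.WC w) ∧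
  H.b ∘ₗ H.a = LinearMap.id

/-- `(fZ, fV)` is a morphism `H → H'` in the category 𝓗. -/
def IsHHom (H H' : HPre) (fZ : H.HZ →ₗ[ℤ] H'.HZ) (fV : H.HV →ₗ[ℂ] H'.HV) : Prop :=
  (∀ w : ℤ, (H.WQ w).map (fZ.baseChange ℚ) ≤ H'.WQ w) ∧
  (∀ w : ℤ, (H.WV w).map fV ≤ H'.WV w) ∧
  (∀ p : ℤ, (H.F p).map fV ≤ H'.F p) ∧
  fV ∘ₗ H.a = H'.a ∘ₗ (fZ.baseChange ℂ) ∧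
  H'.b ∘ₗ fV = (fZ.baseChange ℂ) ∘ₗ H.b

/-- The canonical `A`-linear map `A ⊗_ℤ Hom_ℤ(M, ℤ) → Hom_A(A ⊗_ℤ M, A)`. -/
def dualBaseChange (A : Type*) [CommRing A] (M : Type*) [AddCommGroup M] :
    A ⊗[ℤ] (Module.Dual ℤ M) →ₗ[A] Module.Dual A (A ⊗[ℤ] M) :=
  LinearMap.liftBaseChange A
    { toFun := fun φ => LinearMap.liftBaseChange A ((Algebra.linearMap ℤ A) ∘ₗ φ)
      map_add' := by
        intro φ ψ
        apply LinearMap.ext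
        intro t
        induction t using TensorProduct.induction_on with
        | zero => simp
        | tmul x m => simp [LinearMap.liftBaseChange_tmul, mul_add]
        | add s t hs ht => simp_all; abel
      map_smul' := by
        intro c φ
        apply LinearMap.ext
        intro t
        induction t using TensorProduct.induction_on with
        | zero => simp
        | tmul x m => simp [LinearMap.liftBaseChange_tmul]; ring
        | add s t hs ht => simp_all }

/-- The characterizing property of the map `b` of the dual object:
under the canonical identification `ℂ ⊗ Hom_ℤ(H_ℤ, ℤ) ≅ Hom_ℂ(H_ℂ, ℂ)`,
it is `ψ ↦ ψ ∘ a`. -/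
def IsDualB (H : HPre)
    (b' : Module.Dual ℂ H.HV →ₗ[ℂ] ℂ ⊗[ℤ] Module.Dual ℤ H.HZ) : Prop :=
  (dualBaseChange ℂ H.HZ) ∘ₗ b' = H.a.dualMap

/-- The dual object `H^∨` (its raw data), given a choice `b'` of the map `b` of the dual
(which is uniquely determined by the property `IsDualB H b'`). -/
def dualPre (H : HPre)
    (b' : Module.Dual ℂ H.HV →ₗ[ℂ] ℂ ⊗[ℤ] Module.Dual ℤ H.HZ) : HPre where
  HZ := Module.Dual ℤ H.HZ
  HV := Module.Dual ℂ H.HV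
  WQ w := (H.WQ (-w - 1)).dualAnnihilator.comap (dualBaseChange ℚ H.HZ)
  WV w := (H.WV (-w - 1)).dualAnnihilator
  F p := (H.F (1 - p)).dualAnnihilator
  a := H.b.dualMap ∘ₗ dualBaseChange ℂ H.HZ
  b := b'


/-- Complex conjugation on `H_ℂ = ℂ ⊗_ℤ H_ℤ` relative to the rational structure:
`conj ⊗ id`, as a `ℤ`-linear map. -/
def conjTensor (M : Type*) [AddCommGroup M] : (ℂ ⊗[ℤ] M) →ₗ[ℤ] (ℂ ⊗[ℤ] M) :=
  LinearMap.rTensor M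
    ((Complex.conjAe.toAlgHom.toLinearMap : ℂ →ₗ[ℝ] ℂ).restrictScalars ℤ)

/-- The transport, by the map induced by `b`, of `F^0 gr^W_{-1}H_V` to `gr^W_{-1}H_ℂ`,
described by its full preimage in `W_{-1}H_ℂ` (a subspace containing `W_{-2}H_ℂ`). -/
def F0GrC (H : HPre) : Submodule ℂ (ℂ ⊗[ℤ] H.HZ) :=
  Submodule.map H.b (H.F 0 ⊓ H.WV (-1)) ⊔ H.WC (-2)

/-- The complex conjugate of `F0GrC H`. -/
def F0GrCBar (H : HPre) : Submodule ℂ (ℂ ⊗[ℤ] H.HZ) :=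
  Submodule.span ℂ (conjTensor H.HZ '' (F0GrC H : Set (ℂ ⊗[ℤ] H.HZ)))

/-- `gr^W_{-1}H` is a polarizable Hodge structure of weight `-1` (all conditions are
expressed on the level of representatives in `W_{-1}`, modulo `W_{-2}`). -/
def IsPolarizableGrNegOne (H : HPre) : Prop :=
  -- the maps induced by `a` and `b` are mutually inverse isomorphisms between
  -- `gr^W_{-1}H_ℂ` and `gr^W_{-1}H_V` (the composite `b∘a` being already the identity)
  (∀ v ∈ H.WV (-1), v - H.a (H.b v) ∈ H.WV (-2)) ∧
  -- `gr^W_{-1}H_ℂ = F^0 ⊕ conj(F^0)`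
  F0GrC H ⊔ F0GrCBar H = H.WC (-1) ∧
  F0GrC H ⊓ F0GrCBar H = H.WC (-2) ∧
  -- polarization: an alternating `ℚ`-bilinear form on `gr^W_{-1}H_ℚ` whose `ℂ`-linear
  -- extension `ψC` satisfies `ψC(F^0, F^0) = 0` and `i·ψC(v, conj v) > 0` for `v ≠ 0`
  ∃ ψ : (ℚ ⊗[ℤ] H.HZ) →ₗ[ℚ] (ℚ ⊗[ℤ] H.HZ) →ₗ[ℚ] ℚ,
    (∀ x, ψ x x = 0) ∧
    (∀ x ∈ H.WQ (-2), ∀ y ∈ H.WQ (-1), ψ x y = 0 ∧ ψ y x = 0) ∧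
    ∃ ψC : (ℂ ⊗[ℤ] H.HZ) →ₗ[ℂ] (ℂ ⊗[ℤ] H.HZ) →ₗ[ℂ] ℂ,
      (∀ x y : ℚ ⊗[ℤ] H.HZ,
        ψC (ratToComplex H.HZ x) (ratToComplex H.HZ y) = (ψ x y : ℂ)) ∧
      (∀ u ∈ F0GrC H, ∀ v ∈ F0GrC H, ψC u v = 0) ∧
      (∀ v ∈ F0GrC H, v ∉ H.WC (-2) →
        ∃ r : ℝ, 0 < r ∧ Complex.I * ψC v (conjTensor H.HZ v) = (r : ℂ))

/-- The full subcategory `𝓗_{1,{0,−1}}` of `𝓗`. -/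
def IsH1ZeroNegOne (H : HPre) : Prop :=
  IsHObj H ∧
  -- (i)
  NoZeroSMulDivisors ℤ H.HZ ∧
  H.F (-1) = ⊤ ∧ H.F 1 = ⊥ ∧
  H.WQ 0 = ⊤ ∧ H.WV 0 = ⊤ ∧ H.WQ (-2) = ⊥ ∧ H.WV (-2) = ⊥ ∧
  -- (ii)
  IsPolarizableGrNegOne H ∧
  -- (iii) `F^0 gr^W_0 H_V = gr^W_0 H_V`, equivalently `F^0H_V + W_{−1}H_V = H_V`
  H.F 0 ⊔ H.WV (-1) = ⊤

/-- The full subcategory `𝓗_{1,{−1,−2}}` of `𝓗`. -/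
def IsH1NegOneNegTwo (H : HPre) : Prop :=
  IsHObj H ∧
  -- (i)
  NoZeroSMulDivisors ℤ H.HZ ∧
  H.F (-1) = ⊤ ∧ H.F 1 = ⊥ ∧
  H.WQ (-1) = ⊤ ∧ H.WV (-1) = ⊤ ∧ H.WQ (-3) = ⊥ ∧ H.WV (-3) = ⊥ ∧
  -- (ii)
  IsPolarizableGrNegOne H ∧
  -- (iii) `F^0 W_{−2}H_V = 0`
  H.F 0 ⊓ H.WV (-2) = ⊥

/-- The Tate twist `H(1)`: same `H_ℤ`, `H_V`, `a`, `b`, with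
`W_w(H(1)) = W_{w+2}H` and `F^p(H(1)) = F^{p+1}H`. -/
def tateTwistOne (H : HPre) : HPre :=
  { H with
    WQ := fun w => H.WQ (w + 2)
    WV := fun w => H.WV (w + 2)
    F := fun p => H.F (p + 1) }

/-- The twisted duality functor `D(H) = Hom(H, ℤ)(1)`. -/
def DFun (H : HPre)
    (b' : Module.Dual ℂ H.HV →ₗ[ℂ] ℂ ⊗[ℤ] Module.Dual ℤ H.HZ) : HPre :=
  tateTwistOne (dualPre H b')

section BaseChange

variable {M N : Type*} [AddCommGroup M] [AddCommGroup N]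

/-- The `A`-bilinear extension of a `ℤ`-valued pairing. -/
def pairBaseChange (A : Type*) [CommRing A] (p : N →ₗ[ℤ] M →ₗ[ℤ] ℤ) :
    A ⊗[ℤ] N →ₗ[A] A ⊗[ℤ] M →ₗ[A] A :=
  dualBaseChange A M ∘ₗ p.baseChange A

@[simp]
theorem dualBaseChange_tmul_tmul (A : Type*) [CommRing A] (s t : A) (φ : Module.Dual ℤ M) (m : M) :
    dualBaseChange A M (s ⊗ₜ φ) (t ⊗ₜ m) = s * t * (φ m : A) := by
  simp [dualBaseChange, LinearMap.liftBaseChange_tmul, mul_assoc]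

@[simp]
theorem pairBaseChange_tmul_tmul (A : Type*) [CommRing A] (p : N →ₗ[ℤ] M →ₗ[ℤ] ℤ)
    (s t : A) (n : N) (m : M) :
    pairBaseChange A p (s ⊗ₜ n) (t ⊗ₜ m) = s * t * (p n m : A) := by
  simp [pairBaseChange]

theorem pairBaseChange_flip (A : Type*) [CommRing A] (p : N →ₗ[ℤ] M →ₗ[ℤ] ℤ) :
    pairBaseChange A p.flip = (pairBaseChange A p).flip := by
  ext m n
  simp

theorem dualBaseChange_bijective (A : Type*) [CommRing A] [Module.Finite ℤ M] [Module.Free ℤ M] :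
    Function.Bijective (dualBaseChange A M) := by
  have h : dualBaseChange A M =
      ((TensorProduct.isBaseChange ℤ M A).toDualBaseChange : _ →ₗ[A] _) := by
    ext φ m
    have := (TensorProduct.isBaseChange ℤ M A).toDualBaseChange_tmul 1 φ m
    simp at this
    simp [this]
  rw [h]
  exact LinearEquiv.bijective _

theorem pairBaseChange_bijective (A : Type*) [CommRing A] [Module.Finite ℤ M] [Module.Free ℤ M]
    {p : N →ₗ[ℤ] M →ₗ[ℤ] ℤ} (hp : Function.Bijective p) :
    Function.Bijective (pairBaseChange A p) := by
  have h : Function.Bijective (p.baseChange A) := by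
    have : p.baseChange A = ((LinearEquiv.ofBijective p hp).baseChange ℤ A _ _ : _ →ₗ[A] _) := by
      ext n
      simp
    rw [this]
    exact LinearEquiv.bijective _
  exact (dualBaseChange_bijective A).comp h

@[simp]
theorem ratToComplex_tmul (q : ℚ) (m : M) : ratToComplex M (q ⊗ₜ m) = (q : ℂ) ⊗ₜ m :=
  rfl

@[simp]
theorem ratToComplex_smul (q : ℚ) (x : ℚ ⊗[ℤ] M) :
    ratToComplex M (q • x) = (q : ℂ) • ratToComplex M x := by
  induction x using TensorProduct.induction_on with
  | zero => simp
  | tmul r m => simp [smul_tmul']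
  | add x y hx hy => simp [hx, hy]

@[simp]
theorem conjTensor_tmul (z : ℂ) (m : M) :
    conjTensor M (z ⊗ₜ m) = (starRingEnd ℂ z) ⊗ₜ m :=
  rfl

@[simp]
theorem conjTensor_smul (z : ℂ) (x : ℂ ⊗[ℤ] M) :
    conjTensor M (z • x) = (starRingEnd ℂ z) • conjTensor M x := by
  induction x using TensorProduct.induction_on with
  | zero => simp
  | tmul r m => simp [smul_tmul']
  | add x y hx hy => simp [hx, hy]

@[simp]
theorem conjTensor_conjTensor (x : ℂ ⊗[ℤ] M) : conjTensor M (conjTensor M x) = x := by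
  induction x using TensorProduct.induction_on with
  | zero => simp
  | tmul r m => simp
  | add x y hx hy => simp [hx, hy]

@[simp]
theorem conjTensor_ratToComplex (x : ℚ ⊗[ℤ] M) :
    conjTensor M (ratToComplex M x) = ratToComplex M x := by
  induction x using TensorProduct.induction_on with
  | zero => simp
  | tmul r m => simp
  | add x y hx hy => simp [hx, hy]

theorem pairBaseChange_ratToComplex (p : N →ₗ[ℤ] M →ₗ[ℤ] ℤ) (y : ℚ ⊗[ℤ] N) (x : ℚ ⊗[ℤ] M) :
    pairBaseChange ℂ p (ratToComplex N y) (ratToComplex M x) = (pairBaseChange ℚ p y x : ℂ) := by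
  induction y using TensorProduct.induction_on with
  | zero => simp
  | add y y' hy hy' => simp [hy, hy']
  | tmul q n =>
    induction x using TensorProduct.induction_on with
    | zero => simp
    | add x x' hx hx' => simp only [map_add, hx, hx', Rat.cast_add]
    | tmul r m => simp

theorem pairBaseChange_conjTensor (p : N →ₗ[ℤ] M →ₗ[ℤ] ℤ) (y : ℂ ⊗[ℤ] N) (x : ℂ ⊗[ℤ] M) :
    pairBaseChange ℂ p (conjTensor N y) (conjTensor M x) =
      starRingEnd ℂ (pairBaseChange ℂ p y x) := by
  induction y using TensorProduct.induction_on with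
  | zero => simp
  | add y y' hy hy' => simp [hy, hy']
  | tmul q n =>
    induction x using TensorProduct.induction_on with
    | zero => simp
    | add x x' hx hx' => simp only [map_add, hx, hx']
    | tmul r m => simp

theorem complexTensor_ext {V : Type*} [AddCommGroup V] [Module ℂ V] {f g : ℂ ⊗[ℤ] M →ₗ[ℂ] V}
    (h : ∀ x, f (ratToComplex M x) = g (ratToComplex M x)) : f = g := by
  ext m
  simpa using h (1 ⊗ₜ m)

/-- The `ℂ`-linear extension of a `ℚ`-linear map between rational tensor products. -/
def complexify (f : ℚ ⊗[ℤ] M →ₗ[ℚ] ℚ ⊗[ℤ] N) : ℂ ⊗[ℤ] M →ₗ[ℂ] ℂ ⊗[ℤ] N :=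
  LinearMap.liftBaseChange ℂ
    (ratToComplex N ∘ₗ f.restrictScalars ℤ ∘ₗ TensorProduct.mk ℤ ℚ M 1)

@[simp]
theorem complexify_tmul (f : ℚ ⊗[ℤ] M →ₗ[ℚ] ℚ ⊗[ℤ] N) (z : ℂ) (m : M) :
    complexify f (z ⊗ₜ m) = z • ratToComplex N (f (1 ⊗ₜ m)) :=
  LinearMap.liftBaseChange_tmul ..

@[simp]
theorem complexify_ratToComplex (f : ℚ ⊗[ℤ] M →ₗ[ℚ] ℚ ⊗[ℤ] N) (x : ℚ ⊗[ℤ] M) :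
    complexify f (ratToComplex M x) = ratToComplex N (f x) := by
  induction x using TensorProduct.induction_on with
  | zero => simp
  | add x y hx hy => simp [hx, hy]
  | tmul q m =>
    have : q ⊗ₜ[ℤ] m = q • ((1 : ℚ) ⊗ₜ[ℤ] m) := by simp [smul_tmul']
    rw [this, ratToComplex_smul, map_smul f, ratToComplex_smul, map_smul (complexify f)]
    simp

theorem complexify_conjTensor (f : ℚ ⊗[ℤ] M →ₗ[ℚ] ℚ ⊗[ℤ] N) (x : ℂ ⊗[ℤ] M) :
    complexify f (conjTensor M x) = conjTensor N (complexify f x) := by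
  induction x using TensorProduct.induction_on with
  | zero => simp
  | add x y hx hy => simp [hx, hy]
  | tmul z m => simp

theorem complexify_mem_span (f : ℚ ⊗[ℤ] M →ₗ[ℚ] ℚ ⊗[ℤ] N) {W : Submodule ℚ (ℚ ⊗[ℤ] N)}
    (h : ∀ x, f x ∈ W) (x : ℂ ⊗[ℤ] M) :
    complexify f x ∈ Submodule.span ℂ (ratToComplex N '' (W : Set (ℚ ⊗[ℤ] N))) := by
  induction x using TensorProduct.induction_on with
  | zero => simp
  | add x y hx hy => simpa using add_mem hx hy
  | tmul z m =>
    simpa using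
      Submodule.smul_mem _ z (Submodule.subset_span (Set.mem_image_of_mem _ (h (1 ⊗ₜ m))))

theorem mem_span_ratToComplex_iff [Module.Finite ℤ M] [Module.Free ℤ M]
    {p : N →ₗ[ℤ] M →ₗ[ℤ] ℤ} (hp : Function.Bijective p)
    {W : Submodule ℚ (ℚ ⊗[ℤ] M)} {W' : Submodule ℚ (ℚ ⊗[ℤ] N)}
    (h : ∀ y, y ∈ W' ↔ ∀ x ∈ W, pairBaseChange ℚ p y x = 0) (ξ : ℂ ⊗[ℤ] N) :
    ξ ∈ Submodule.span ℂ (ratToComplex N '' (W' : Set (ℚ ⊗[ℤ] N))) ↔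
      ∀ x ∈ Submodule.span ℂ (ratToComplex M '' (W : Set (ℚ ⊗[ℤ] M))),
        pairBaseChange ℂ p ξ x = 0 := by
  constructor
  · intro hξ x hx
    induction hξ, hx using Submodule.span_induction₂ with
    | mem_mem _ _ hy hx =>
      obtain ⟨y, hy, rfl⟩ := hy
      obtain ⟨x, hx, rfl⟩ := hx
      rw [pairBaseChange_ratToComplex, (h y).1 hy x hx, Rat.cast_zero]
    | zero_left => simp
    | zero_right => simp
    | add_left _ _ _ _ _ _ h₁ h₂ => simp [h₁, h₂]
    | add_right _ _ _ _ _ _ h₁ h₂ => simp [h₁, h₂]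
    | smul_left _ _ _ _ _ h => simp [h]
    | smul_right _ _ _ _ _ h => simp [h]
  · intro hξ
    obtain ⟨g, hg⟩ := LinearMap.exists_leftInverse_of_injective W.subtype W.ker_subtype
    let P := W.subtype ∘ₗ g
    let e := LinearEquiv.ofBijective _ (pairBaseChange_bijective ℚ hp)
    let Q := e.symm.toLinearMap ∘ₗ (LinearMap.id - P).dualMap ∘ₗ e.toLinearMap
    have hQ (y x) : pairBaseChange ℚ p (Q y) x = pairBaseChange ℚ p y (x - P x) := by
      have : e (Q y) = (LinearMap.id - P).dualMap (e y) := by simp [Q]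
      exact LinearMap.congr_fun this x
    have hQW (y) : Q y ∈ W' := by
      rw [h]
      intro x hx
      have : P x = x := congrArg Subtype.val (LinearMap.congr_fun hg ⟨x, hx⟩)
      rw [hQ, this, sub_self, map_zero]
    have key : pairBaseChange ℂ p ∘ₗ complexify Q =
        (LinearMap.id - complexify P).dualMap ∘ₗ pairBaseChange ℂ p := by
      refine complexTensor_ext fun y => complexTensor_ext fun x => ?_
      simp only [LinearMap.comp_apply, complexify_ratToComplex, LinearMap.dualMap_apply,
        LinearMap.sub_apply, LinearMap.id_apply, ← map_sub, pairBaseChange_ratToComplex, hQ]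
    have : complexify Q ξ = ξ := by
      apply (pairBaseChange_bijective ℂ hp).injective
      refine LinearMap.ext fun x => ?_
      have h₁ := LinearMap.congr_fun (LinearMap.congr_fun key ξ) x
      simp only [LinearMap.comp_apply, LinearMap.dualMap_apply, LinearMap.sub_apply,
        LinearMap.id_apply, map_sub] at h₁
      rw [h₁, hξ (complexify P x) (complexify_mem_span P (fun x => (g x).2) x), sub_zero]
    rw [← this]
    exact complexify_mem_span Q hQW ξ

end BaseChange

section WeightHodge

theorem conjTensor_mem_WC {H : HPre} {w : ℤ} {x : ℂ ⊗[ℤ] H.HZ} (hx : x ∈ H.WC w) :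
    conjTensor H.HZ x ∈ H.WC w := by
  unfold HPre.WC at hx ⊢
  induction hx using Submodule.span_induction with
  | mem _ hx =>
    obtain ⟨x, hx, rfl⟩ := hx
    rw [conjTensor_ratToComplex]
    exact Submodule.subset_span (Set.mem_image_of_mem _ hx)
  | zero => simp
  | add _ _ _ _ h₁ h₂ => simpa using add_mem h₁ h₂
  | smul c _ _ h => simpa using Submodule.smul_mem _ _ h

theorem mem_F0GrCBar_iff {H : HPre} {x : ℂ ⊗[ℤ] H.HZ} :
    x ∈ F0GrCBar H ↔ conjTensor H.HZ x ∈ F0GrC H := by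
  constructor
  · intro hx
    unfold F0GrCBar at hx
    induction hx using Submodule.span_induction with
    | mem _ hx =>
      obtain ⟨x, hx, rfl⟩ := hx
      simpa using hx
    | zero => simp
    | add _ _ _ _ h₁ h₂ => simpa using add_mem h₁ h₂
    | smul c _ _ h => simpa using Submodule.smul_mem _ _ h
  · intro hx
    rw [← conjTensor_conjTensor x]
    exact Submodule.subset_span (Set.mem_image_of_mem _ hx)

theorem HPre.monotone_WC {H : HPre} (hH : Monotone H.WQ) : Monotone H.WC :=
  fun _ _ h => Submodule.span_mono (Set.image_mono (hH h))

theorem F0GrC_le_WC {H : HPre} (hH : IsHObj H) : F0GrC H ≤ H.WC (-1) := by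
  obtain ⟨_, _, hWQ, _, _, _, hb, _⟩ := hH
  exact sup_le ((Submodule.map_mono inf_le_right).trans (hb _))
    (HPre.monotone_WC hWQ (by norm_num))

/-- `K` is identified with `Hom(H, ℤ)(1)` by the perfect pairings `p` and `q`. -/
structure IsTwistedDual (H K : HPre) (p : K.HZ →ₗ[ℤ] H.HZ →ₗ[ℤ] ℤ)
    (q : K.HV →ₗ[ℂ] H.HV →ₗ[ℂ] ℂ) : Prop where
  bijective_left : Function.Bijective p
  bijective_right : Function.Bijective p.flip
  bijective_left_V : Function.Bijective q
  bijective_right_V : Function.Bijective q.flip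
  mem_WQ_iff {w w' : ℤ} (hw : w + w' = -3) (y : ℚ ⊗[ℤ] K.HZ) :
    y ∈ K.WQ w ↔ ∀ x ∈ H.WQ w', pairBaseChange ℚ p y x = 0
  mem_WV_iff {w w' : ℤ} (hw : w + w' = -3) (φ : K.HV) :
    φ ∈ K.WV w ↔ ∀ v ∈ H.WV w', q φ v = 0
  mem_F_iff {i j : ℤ} (hij : i + j = 0) (φ : K.HV) :
    φ ∈ K.F i ↔ ∀ v ∈ H.F j, q φ v = 0
  pair_a (y : ℂ ⊗[ℤ] K.HZ) (v : H.HV) : q (K.a y) v = pairBaseChange ℂ p y (H.b v)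
  pair_b (φ : K.HV) (x : ℂ ⊗[ℤ] H.HZ) : pairBaseChange ℂ p (K.b φ) x = q φ (H.a x)

theorem mem_iff_of_mem_iff_flip {k V W : Type*} [Field k] [AddCommGroup V] [AddCommGroup W]
    [Module k V] [Module k W] {q : W →ₗ[k] V →ₗ[k] k} (hq : Function.Bijective q)
    {S : Submodule k V} {T : Submodule k W} (h : ∀ y, y ∈ T ↔ ∀ x ∈ S, q y x = 0) (x : V) :
    x ∈ S ↔ ∀ y ∈ T, q y x = 0 := by
  rw [← Subspace.forall_mem_dualAnnihilator_apply_eq_zero_iff]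
  constructor
  · intro hx y hy
    exact hx _ ((Submodule.mem_dualAnnihilator _).2 ((h y).1 hy))
  · intro hx φ hφ
    obtain ⟨y, rfl⟩ := hq.surjective φ
    exact hx y ((h y).2 ((Submodule.mem_dualAnnihilator _).1 hφ))

namespace IsTwistedDual

variable {H K : HPre} {p : K.HZ →ₗ[ℤ] H.HZ →ₗ[ℤ] ℤ} {q : K.HV →ₗ[ℂ] H.HV →ₗ[ℂ] ℂ}

theorem symm [Module.Finite ℤ H.HZ] [Module.Free ℤ H.HZ] (h : IsTwistedDual H K p q) :
    IsTwistedDual K H p.flip q.flip where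
  bijective_left := h.bijective_right
  bijective_right := h.bijective_left
  bijective_left_V := h.bijective_right_V
  bijective_right_V := h.bijective_left_V
  mem_WQ_iff hw y := by
    rw [pairBaseChange_flip]
    exact mem_iff_of_mem_iff_flip (pairBaseChange_bijective ℚ h.bijective_left)
      (h.mem_WQ_iff (by rwa [add_comm])) y
  mem_WV_iff hw := mem_iff_of_mem_iff_flip h.bijective_left_V (h.mem_WV_iff (by rwa [add_comm]))
  mem_F_iff hw := mem_iff_of_mem_iff_flip h.bijective_left_V (h.mem_F_iff (by rwa [add_comm]))
  pair_a y v := by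
    rw [pairBaseChange_flip]
    exact (h.pair_b v y).symm
  pair_b φ x := by
    rw [pairBaseChange_flip]
    exact (h.pair_a x φ).symm

theorem finite [Module.Finite ℤ H.HZ] [Module.Free ℤ H.HZ] (h : IsTwistedDual H K p q) :
    Module.Finite ℤ K.HZ :=
  Module.Finite.equiv (LinearEquiv.ofBijective p h.bijective_left).symm

theorem free [Module.Finite ℤ H.HZ] [Module.Free ℤ H.HZ] (h : IsTwistedDual H K p q) :
    Module.Free ℤ K.HZ :=
  Module.Free.of_equiv (LinearEquiv.ofBijective p h.bijective_left).symm

theorem mem_WC_iff [Module.Finite ℤ H.HZ] [Module.Free ℤ H.HZ] (h : IsTwistedDual H K p q)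
    {w w' : ℤ} (hw : w + w' = -3) (ξ : ℂ ⊗[ℤ] K.HZ) :
    ξ ∈ K.WC w ↔ ∀ x ∈ H.WC w', pairBaseChange ℂ p ξ x = 0 :=
  mem_span_ratToComplex_iff h.bijective_left (h.mem_WQ_iff hw) ξ

theorem isHObj [Module.Finite ℤ H.HZ] [Module.Free ℤ H.HZ] (h : IsTwistedDual H K p q)
    (hH : IsHObj H) : IsHObj K := by
  obtain ⟨_, _, hWQ, hWV, hF, ha, hb, hba⟩ := hH
  refine ⟨h.finite, Module.Finite.equiv (LinearEquiv.ofBijective q h.bijective_left_V).symm,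
    fun w w' hw y hy => ?_, fun w w' hw y hy => ?_, fun i j hij φ hφ => ?_, fun w => ?_,
    fun w => ?_, ?_⟩
  · rw [h.mem_WQ_iff (add_sub_cancel _ _)] at hy ⊢
    exact fun x hx => hy x (hWQ (by omega) hx)
  · rw [h.mem_WV_iff (add_sub_cancel _ _)] at hy ⊢
    exact fun x hx => hy x (hWV (by omega) hx)
  · rw [h.mem_F_iff (add_neg_cancel _)] at hφ ⊢
    exact fun x hx => hφ x (hF (by omega) hx)
  · rintro _ ⟨y, hy, rfl⟩
    rw [SetLike.mem_coe, h.mem_WC_iff (add_sub_cancel _ _)] at hy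
    rw [h.mem_WV_iff (add_sub_cancel _ _)]
    intro v hv
    rw [h.pair_a]
    exact hy _ (hb _ (Submodule.mem_map_of_mem hv))
  · rintro _ ⟨φ, hφ, rfl⟩
    rw [SetLike.mem_coe, h.mem_WV_iff (add_sub_cancel _ _)] at hφ
    rw [h.mem_WC_iff (add_sub_cancel _ _)]
    intro x hx
    rw [h.pair_b]
    exact hφ _ (ha _ (Submodule.mem_map_of_mem hx))
  · refine LinearMap.ext fun y => (pairBaseChange_bijective ℂ h.bijective_left).injective ?_
    refine LinearMap.ext fun x => ?_
    rw [LinearMap.comp_apply, h.pair_b, h.pair_a, ← LinearMap.comp_apply H.b, hba]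
    rfl

theorem mem_F0GrC_iff [Module.Finite ℤ H.HZ] [Module.Free ℤ H.HZ] (h : IsTwistedDual H K p q)
    (hH : IsHObj H) (hab : ∀ v ∈ H.WV (-1), v - H.a (H.b v) ∈ H.WV (-2)) (ξ : ℂ ⊗[ℤ] K.HZ) :
    ξ ∈ F0GrC K ↔ ∀ x ∈ F0GrC H, pairBaseChange ℂ p ξ x = 0 := by
  have hHF := F0GrC_le_WC hH
  obtain ⟨_, _, hWQ, hWV, hF, ha, hb, hba⟩ := hH
  constructor
  · suffices F0GrC K ≤ ((F0GrC H).dualAnnihilator).comap (pairBaseChange ℂ p) from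
      fun hξ => (Submodule.mem_dualAnnihilator _).1 (this hξ)
    refine sup_le ?_ fun η hη => (Submodule.mem_dualAnnihilator _).2 fun x hx =>
      (h.mem_WC_iff (by norm_num) η).1 hη x (hHF hx)
    rintro _ ⟨φ, ⟨hφF, hφW⟩, rfl⟩
    rw [SetLike.mem_coe, h.mem_F_iff (zero_add 0)] at hφF
    rw [SetLike.mem_coe, h.mem_WV_iff (w' := -2) (by norm_num)] at hφW
    refine (Submodule.mem_dualAnnihilator _).2 fun x hx => ?_
    rw [h.pair_b]
    obtain ⟨_, ⟨v, ⟨hvF, hvW⟩, rfl⟩, z, hz, rfl⟩ := Submodule.mem_sup.1 hx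
    have h₁ := hφW _ (hab v hvW)
    rw [map_sub, hφF v hvF, zero_sub, neg_eq_zero] at h₁
    rw [map_add, map_add, h₁, hφW _ (ha _ (Submodule.mem_map_of_mem hz)), add_zero]
  · intro hξ
    have hle : (H.F 0 ⊔ H.WV (-2)).comap H.a ⊓ H.WC (-1) ≤ F0GrC H := by
      rintro x ⟨hx, hxW⟩
      obtain ⟨f, hf, w, hw, hfw⟩ := Submodule.mem_sup.1 hx
      have hxV := ha _ (Submodule.mem_map_of_mem hxW)
      have hfW : f ∈ H.WV (-1) := by
        rw [← hfw] at hxV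
        exact (Submodule.add_mem_iff_left _ (hWV (by norm_num) hw)).1 hxV
      have : x = H.b f + H.b w := by
        rw [← map_add, hfw, ← LinearMap.comp_apply, hba, LinearMap.id_apply]
      rw [this]
      exact Submodule.add_mem_sup (Submodule.mem_map_of_mem ⟨hf, hfW⟩)
        (hb _ (Submodule.mem_map_of_mem hw))
    have hmem : pairBaseChange ℂ p ξ ∈
        ((H.F 0 ⊔ H.WV (-2)).comap H.a ⊓ H.WC (-1)).dualAnnihilator :=
      (Submodule.mem_dualAnnihilator _).2 fun x hx => hξ x (hle hx)
    rw [Subspace.dualAnnihilator_inf_eq] at hmem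
    obtain ⟨α, hα, β, hβ, hαβ⟩ := Submodule.mem_sup.1 hmem
    obtain ⟨η, rfl⟩ := (pairBaseChange_bijective ℂ h.bijective_left).surjective β
    have hcomap : (H.F 0 ⊔ H.WV (-2)).comap H.a =
        LinearMap.ker ((H.F 0 ⊔ H.WV (-2)).mkQ ∘ₗ H.a) := by
      rw [LinearMap.ker_comp, Submodule.ker_mkQ]
    rw [hcomap, ← LinearMap.range_dualMap_eq_dualAnnihilator_ker] at hα
    obtain ⟨γ, rfl⟩ := hα
    obtain ⟨φ, hφ⟩ := h.bijective_left_V.surjective (γ ∘ₗ (H.F 0 ⊔ H.WV (-2)).mkQ)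
    have hφ₀ : ∀ v ∈ H.F 0 ⊔ H.WV (-2), q φ v = 0 := fun v hv => by
      rw [hφ, LinearMap.comp_apply, Submodule.mkQ_apply, (Submodule.Quotient.mk_eq_zero _).2 hv,
        map_zero]
    have : ξ = K.b φ + η := by
      apply (pairBaseChange_bijective ℂ h.bijective_left).injective
      rw [map_add, ← hαβ]
      congr 1
      refine LinearMap.ext fun x => ?_
      rw [h.pair_b, hφ]
      rfl
    rw [this]
    refine Submodule.add_mem_sup (Submodule.mem_map_of_mem ⟨?_, ?_⟩)
      ((h.mem_WC_iff (by norm_num) η).2 ((Submodule.mem_dualAnnihilator _).1 hβ))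
    · exact (h.mem_F_iff (zero_add 0) φ).2 fun v hv => hφ₀ v (Submodule.mem_sup_left hv)
    · exact (h.mem_WV_iff (by norm_num) φ).2 fun v hv => hφ₀ v (Submodule.mem_sup_right hv)

theorem mem_F0GrCBar_iff [Module.Finite ℤ H.HZ] [Module.Free ℤ H.HZ] (h : IsTwistedDual H K p q)
    (hH : IsHObj H) (hab : ∀ v ∈ H.WV (-1), v - H.a (H.b v) ∈ H.WV (-2)) (ξ : ℂ ⊗[ℤ] K.HZ) :
    ξ ∈ F0GrCBar K ↔ ∀ x ∈ F0GrCBar H, pairBaseChange ℂ p ξ x = 0 := by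
  rw [_root_.mem_F0GrCBar_iff, h.mem_F0GrC_iff hH hab]
  constructor
  · intro hξ x hx
    have := hξ _ (_root_.mem_F0GrCBar_iff.1 hx)
    rwa [pairBaseChange_conjTensor, map_eq_zero] at this
  · intro hξ x hx
    have := hξ (conjTensor _ x) (_root_.mem_F0GrCBar_iff.2 (by rwa [conjTensor_conjTensor]))
    rwa [← map_eq_zero (starRingEnd ℂ), ← pairBaseChange_conjTensor, conjTensor_conjTensor] at this

end IsTwistedDual

theorem LinearMap.exists_comp_comp_eq_self {k V V' : Type*} [Field k] [AddCommGroup V]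
    [AddCommGroup V'] [Module k V] [Module k V'] (T : V →ₗ[k] V') :
    ∃ g : V' →ₗ[k] V, T ∘ₗ g ∘ₗ T = T := by
  obtain ⟨r, hr⟩ := T.rangeRestrict.exists_rightInverse_of_surjective T.range_rangeRestrict
  obtain ⟨g, hg⟩ := LinearMap.exists_extend r
  refine ⟨g, LinearMap.ext fun x => ?_⟩
  have h₁ : g (T x) = r (T.rangeRestrict x) := LinearMap.congr_fun hg (T.rangeRestrict x)
  rw [LinearMap.comp_apply, LinearMap.comp_apply, h₁]
  exact congrArg Subtype.val (LinearMap.congr_fun hr (T.rangeRestrict x))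

theorem exists_linearMap_eq_on_of_alternating {k V : Type*} [Field k] [AddCommGroup V] [Module k V]
    [FiniteDimensional k V] {ψ : V →ₗ[k] V →ₗ[k] k} (hψ : ∀ x, ψ x x = 0) (W R : Submodule k V)
    (hR : ∀ x ∈ W, (∀ y ∈ W, ψ x y = 0) → x ∈ R) :
    ∃ s : Module.Dual k V →ₗ[k] V, (∀ φ, s φ ∈ W) ∧
      ∀ φ ∈ R.dualAnnihilator, ∀ y ∈ W, ψ (s φ) y = φ y := by
  let T : W →ₗ[k] Module.Dual k W := ψ.domRestrict₁₂ W W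
  obtain ⟨g, hg⟩ := T.exists_comp_comp_eq_self
  refine ⟨W.subtype ∘ₗ g ∘ₗ W.subtype.dualMap, fun φ => Subtype.prop _, fun φ hφ y hy => ?_⟩
  have hmem : φ ∘ₗ W.subtype ∈ LinearMap.range T := by
    have hker : φ ∘ₗ W.subtype ∈ (LinearMap.ker T).dualAnnihilator := by
      refine (Submodule.mem_dualAnnihilator _).2 fun x hx => ?_
      refine (Submodule.mem_dualAnnihilator _).1 hφ _ (hR x x.2 fun y hy => ?_)
      exact LinearMap.congr_fun (LinearMap.mem_ker.1 hx) ⟨y, hy⟩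
    rw [← LinearMap.range_dualMap_eq_dualAnnihilator_ker] at hker
    obtain ⟨θ, hθ⟩ := hker
    obtain ⟨x, rfl⟩ := (Module.evalEquiv k W).surjective θ
    refine ⟨-x, ?_⟩
    rw [← hθ]
    ext y
    have h₁ : ψ (x + y : V) (x + y : V) = 0 := hψ _
    simp only [map_add, LinearMap.add_apply, hψ, zero_add, add_zero] at h₁
    simp only [map_neg, LinearMap.neg_apply]
    change -(ψ x y) = ψ y x
    linear_combination -h₁
  obtain ⟨x, hx⟩ := hmem
  have h₁ : T (g (φ ∘ₗ W.subtype)) = φ ∘ₗ W.subtype := by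
    rw [← hx]
    exact LinearMap.congr_fun hg x
  exact LinearMap.congr_fun h₁ ⟨y, hy⟩

namespace IsTwistedDual

variable {H K : HPre} {p : K.HZ →ₗ[ℤ] H.HZ →ₗ[ℤ] ℤ} {q : K.HV →ₗ[ℂ] H.HV →ₗ[ℂ] ℂ}

theorem isPolarizableGrNegOne [Module.Finite ℤ H.HZ] [Module.Free ℤ H.HZ]
    (h : IsTwistedDual H K p q) (hH : IsHObj H) (hpol : IsPolarizableGrNegOne H) :
    IsPolarizableGrNegOne K := by
  obtain ⟨hab, hsup, hinf, ψ, halt, hψrad, ψC, hψC, hiso, hpos⟩ := hpol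
  have hK := h.isHObj hH
  have memF := h.mem_F0GrC_iff hH hab
  have memFbar := h.mem_F0GrCBar_iff hH hab
  have memC₁ := h.mem_WC_iff (w := -1) (w' := -2) (by norm_num)
  have memC₂ := h.mem_WC_iff (w := -2) (w' := -1) (by norm_num)
  have hpC := pairBaseChange_bijective ℂ h.bijective_left
  have eq_comap {S : Submodule ℂ (ℂ ⊗[ℤ] K.HZ)} {T : Submodule ℂ (ℂ ⊗[ℤ] H.HZ)}
      (hST : ∀ ξ, ξ ∈ S ↔ ∀ x ∈ T, pairBaseChange ℂ p ξ x = 0) :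
      S = T.dualAnnihilator.comap (pairBaseChange ℂ p) :=
    Submodule.ext fun ξ => (hST ξ).trans (Submodule.mem_dualAnnihilator _).symm
  have hanti : ∀ x y, ψC x y = -ψC y x := by
    have : ψC = -ψC.flip := by
      refine complexTensor_ext fun x => complexTensor_ext fun y => ?_
      have h₁ := halt (x + y)
      simp only [map_add, LinearMap.add_apply, halt, zero_add, add_zero] at h₁
      rw [LinearMap.neg_apply, LinearMap.neg_apply, LinearMap.flip_apply, hψC, hψC,
        eq_neg_of_add_eq_zero_left h₁, Rat.cast_neg, neg_neg]
    intro x y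
    exact LinearMap.congr_fun (LinearMap.congr_fun this x) y
  have hrad : ∀ x ∈ H.WC (-2), ∀ y ∈ H.WC (-1), ψC x y = 0 := by
    intro x hx y hy
    unfold HPre.WC at hx hy
    induction hx, hy using Submodule.span_induction₂ with
    | mem_mem _ _ hx hy =>
      obtain ⟨x, hx, rfl⟩ := hx
      obtain ⟨y, hy, rfl⟩ := hy
      rw [hψC, (hψrad x hx y hy).1, Rat.cast_zero]
    | zero_left => simp
    | zero_right => simp
    | add_left _ _ _ _ _ _ h₁ h₂ => simp [h₁, h₂]
    | add_right _ _ _ _ _ _ h₁ h₂ => simp [h₁, h₂]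
    | smul_left _ _ _ _ _ h => simp [h]
    | smul_right _ _ _ _ _ h => simp [h]
  have hW₂F : H.WC (-2) ≤ F0GrC H := le_sup_right
  have hFW₁ : F0GrC H ≤ H.WC (-1) := F0GrC_le_WC hH
  have hpos' : ∀ v ∈ F0GrC H, ψC v (conjTensor H.HZ v) = 0 → v ∈ H.WC (-2) := by
    intro v hv h₀
    by_contra hv'
    obtain ⟨r, hr, h₁⟩ := hpos v hv hv'
    rw [h₀, mul_zero] at h₁
    exact hr.ne (Complex.ofReal_eq_zero.1 h₁.symm).symm
  have hmax : ∀ v ∈ H.WC (-1), (∀ u ∈ F0GrC H, ψC v u = 0) → v ∈ F0GrC H := by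
    intro v hv hvF
    rw [← hsup] at hv
    obtain ⟨u, hu, z, hz, rfl⟩ := Submodule.mem_sup.1 hv
    rw [_root_.mem_F0GrCBar_iff] at hz
    have h₁ := hvF _ hz
    rw [map_add, LinearMap.add_apply, hiso u hu _ hz, zero_add, hanti, neg_eq_zero] at h₁
    have h₂ := hpos' _ hz (by rwa [conjTensor_conjTensor])
    have h₃ := conjTensor_mem_WC h₂
    rw [conjTensor_conjTensor] at h₃
    exact add_mem hu (hW₂F h₃)
  have hvan : ∀ x ∈ H.WQ (-1), (∀ y ∈ H.WQ (-1), ψ x y = 0) →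
      ratToComplex H.HZ x ∈ H.WC (-2) := by
    intro x hx hxy
    have hxC : ratToComplex H.HZ x ∈ H.WC (-1) := Submodule.subset_span (Set.mem_image_of_mem _ hx)
    have h₁ : H.WC (-1) ≤ LinearMap.ker (ψC (ratToComplex H.HZ x)) := by
      refine Submodule.span_le.2 ?_
      rintro _ ⟨y, hy, rfl⟩
      rw [SetLike.mem_coe, LinearMap.mem_ker, hψC, hxy y hy, Rat.cast_zero]
    refine hpos' _ (hmax _ hxC fun u hu => h₁ (hFW₁ hu)) ?_
    rw [conjTensor_ratToComplex]
    exact h₁ hxC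
  -- `R` is the space of rational classes whose complexification lies in `W_{-2}`
  let R : Submodule ℚ (ℚ ⊗[ℤ] H.HZ) :=
    (((K.WQ (-1)).map (pairBaseChange ℚ p)).dualCoannihilator)
  have hR : ∀ x ∈ H.WQ (-1), (∀ y ∈ H.WQ (-1), ψ x y = 0) → x ∈ R := by
    intro x hx hxy
    refine (Submodule.mem_dualCoannihilator _).2 ?_
    rintro _ ⟨y, hy, rfl⟩
    have hyC : ratToComplex K.HZ y ∈ K.WC (-1) := Submodule.subset_span (Set.mem_image_of_mem _ hy)
    have := (memC₁ _).1 hyC _ (hvan x hx hxy)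
    rwa [pairBaseChange_ratToComplex, Rat.cast_eq_zero] at this
  obtain ⟨s, hsW, hs⟩ := exists_linearMap_eq_on_of_alternating halt (H.WQ (-1)) R hR
  let t : ℚ ⊗[ℤ] K.HZ →ₗ[ℚ] ℚ ⊗[ℤ] H.HZ := s ∘ₗ pairBaseChange ℚ p
  have ht : ∀ y ∈ K.WQ (-1), ∀ x ∈ H.WQ (-1), ψ (t y) x = pairBaseChange ℚ p y x := by
    intro y hy x hx
    refine hs _ ((Submodule.mem_dualAnnihilator _).2 fun z hz => ?_) x hx
    exact (Submodule.mem_dualCoannihilator _).1 hz _ (Submodule.mem_map_of_mem hy)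
  have htW (ξ) : complexify t ξ ∈ H.WC (-1) := complexify_mem_span t (fun y => hsW _) ξ
  have htC : ∀ ξ ∈ K.WC (-1), ∀ x ∈ H.WC (-1),
      ψC (complexify t ξ) x = pairBaseChange ℂ p ξ x := by
    intro x hx y hy
    unfold HPre.WC at hx hy
    induction hx, hy using Submodule.span_induction₂ with
    | mem_mem _ _ hx hy =>
      obtain ⟨x, hx, rfl⟩ := hx
      obtain ⟨y, hy, rfl⟩ := hy
      rw [complexify_ratToComplex, hψC, ht x hx y hy, pairBaseChange_ratToComplex]
    | zero_left => simp
    | zero_right => simp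
    | add_left _ _ _ _ _ _ h₁ h₂ => simp [h₁, h₂]
    | add_right _ _ _ _ _ _ h₁ h₂ => simp [h₁, h₂]
    | smul_left _ _ _ _ _ h => simp [h]
    | smul_right _ _ _ _ _ h => simp [h]
  have hFK := F0GrC_le_WC hK
  have htF : ∀ ξ ∈ F0GrC K, complexify t ξ ∈ F0GrC H := fun ξ hξ =>
    hmax _ (htW ξ) fun u hu => by
      rw [htC ξ (hFK hξ) u (hFW₁ hu)]
      exact (memF ξ).1 hξ u hu
  refine ⟨fun φ hφ => ?_, ?_, ?_, ψ.compl₁₂ t t, fun y => halt _, fun y hy y' hy' => ?_,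
    ψC.compl₁₂ (complexify t) (complexify t), fun y y' => ?_,
    fun ξ hξ η hη => hiso _ (htF ξ hξ) _ (htF η hη), fun ξ hξ hξ' => ?_⟩
  · rw [h.mem_WV_iff (w' := -2) (by norm_num)] at hφ
    rw [h.mem_WV_iff (w' := -1) (by norm_num)]
    intro v hv
    have := hφ _ (hab v hv)
    rwa [map_sub, ← h.pair_b, ← h.pair_a, ← LinearMap.sub_apply, ← map_sub] at this
  · rw [eq_comap memF, eq_comap memFbar, eq_comap memC₁, ← hinf, Subspace.dualAnnihilator_inf_eq,
      Submodule.comap_sup_of_injective hpC.injective]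
    all_goals rw [LinearMap.range_eq_top.2 hpC.surjective]; exact le_top
  · rw [eq_comap memF, eq_comap memFbar, eq_comap memC₂, ← hsup, Submodule.dualAnnihilator_sup_eq,
      Submodule.comap_inf]
  · have hy₁ : y ∈ K.WQ (-1) := hK.2.2.1 (by norm_num) hy
    have : ψ (t y) (t y') = 0 := by
      rw [ht y hy₁ (t y') (hsW _)]
      exact (h.mem_WQ_iff (by norm_num) y).1 hy _ (hsW _)
    refine ⟨this, ?_⟩
    have h₁ := halt (t y + t y')
    simpa only [LinearMap.compl₁₂_apply, map_add, LinearMap.add_apply, halt, zero_add, add_zero,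
      this] using h₁
  · simp only [LinearMap.compl₁₂_apply, complexify_ratToComplex, hψC]
  · rw [LinearMap.compl₁₂_apply, complexify_conjTensor]
    refine hpos _ (htF ξ hξ) fun hmem => hξ' ((memC₂ ξ).2 fun x hx => ?_)
    rw [← htC ξ (hFK hξ) x hx]
    exact hrad _ hmem x hx

theorem noZeroSMulDivisors [Module.Finite ℤ H.HZ] [Module.Free ℤ H.HZ]
    (h : IsTwistedDual H K p q) : NoZeroSMulDivisors ℤ K.HZ :=
  have := h.free
  ⟨fun h₀ => smul_eq_zero.1 h₀⟩

theorem WQ_eq_bot (h : IsTwistedDual H K p q) [Module.Finite ℤ H.HZ] [Module.Free ℤ H.HZ]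
    {w w' : ℤ} (hw : w + w' = -3) (hH : H.WQ w' = ⊤) : K.WQ w = ⊥ := by
  refine (Submodule.eq_bot_iff _).2 fun y hy => ?_
  apply (pairBaseChange_bijective ℚ h.bijective_left).injective
  refine LinearMap.ext fun x => ?_
  rw [(h.mem_WQ_iff hw y).1 hy x (by simp [hH])]
  simp

theorem WQ_eq_top (h : IsTwistedDual H K p q) {w w' : ℤ} (hw : w + w' = -3)
    (hH : H.WQ w' = ⊥) : K.WQ w = ⊤ :=
  Submodule.eq_top_iff'.2 fun y => (h.mem_WQ_iff hw y).2 (by simp [hH])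

theorem WV_eq (h : IsTwistedDual H K p q) {w w' : ℤ} (hw : w + w' = -3) :
    K.WV w = (H.WV w').dualAnnihilator.comap q :=
  Submodule.ext fun φ => (h.mem_WV_iff hw φ).trans (Submodule.mem_dualAnnihilator _).symm

theorem F_eq (h : IsTwistedDual H K p q) {i j : ℤ} (hij : i + j = 0) :
    K.F i = (H.F j).dualAnnihilator.comap q :=
  Submodule.ext fun φ => (h.mem_F_iff hij φ).trans (Submodule.mem_dualAnnihilator _).symm

theorem comap_bot (h : IsTwistedDual H K p q) :
    (⊥ : Submodule ℂ (Module.Dual ℂ H.HV)).comap q = ⊥ :=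
  (Submodule.comap_bot _).trans (LinearMap.ker_eq_bot.2 h.bijective_left_V.injective)

theorem isH1NegOneNegTwo (h : IsTwistedDual H K p q) [Module.Finite ℤ H.HZ] [Module.Free ℤ H.HZ]
    (hH : IsH1ZeroNegOne H) : IsH1NegOneNegTwo K := by
  obtain ⟨hO, _, hF₁, hF₂, hQ₁, hV₁, hQ₂, hV₂, hpol, hFW⟩ := hH
  refine ⟨h.isHObj hO, h.noZeroSMulDivisors, ?_, ?_, h.WQ_eq_top (by norm_num) hQ₂, ?_,
    h.WQ_eq_bot (by norm_num) hQ₁, ?_, h.isPolarizableGrNegOne hO hpol, ?_⟩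
  · rw [h.F_eq (j := 1) (by norm_num), hF₂, Submodule.dualAnnihilator_bot, Submodule.comap_top]
  · rw [h.F_eq (j := -1) (by norm_num), hF₁, Submodule.dualAnnihilator_top, h.comap_bot]
  · rw [h.WV_eq (w' := -2) (by norm_num), hV₂, Submodule.dualAnnihilator_bot, Submodule.comap_top]
  · rw [h.WV_eq (w' := 0) (by norm_num), hV₁, Submodule.dualAnnihilator_top, h.comap_bot]
  · rw [h.F_eq (zero_add 0), h.WV_eq (w' := -1) (by norm_num), ← Submodule.comap_inf,
      ← Submodule.dualAnnihilator_sup_eq, hFW, Submodule.dualAnnihilator_top, h.comap_bot]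

theorem isH1ZeroNegOne (h : IsTwistedDual H K p q) [Module.Finite ℤ H.HZ] [Module.Free ℤ H.HZ]
    (hH : IsH1NegOneNegTwo H) : IsH1ZeroNegOne K := by
  obtain ⟨hO, _, hF₁, hF₂, hQ₁, hV₁, hQ₂, hV₂, hpol, hFW⟩ := hH
  refine ⟨h.isHObj hO, h.noZeroSMulDivisors, ?_, ?_, h.WQ_eq_top (by norm_num) hQ₂, ?_,
    h.WQ_eq_bot (by norm_num) hQ₁, ?_, h.isPolarizableGrNegOne hO hpol, ?_⟩
  · rw [h.F_eq (j := 1) (by norm_num), hF₂, Submodule.dualAnnihilator_bot, Submodule.comap_top]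
  · rw [h.F_eq (j := -1) (by norm_num), hF₁, Submodule.dualAnnihilator_top, h.comap_bot]
  · rw [h.WV_eq (w' := -3) (by norm_num), hV₂, Submodule.dualAnnihilator_bot, Submodule.comap_top]
  · rw [h.WV_eq (w' := -1) (by norm_num), hV₁, Submodule.dualAnnihilator_top, h.comap_bot]
  · have htop : ((H.F 0).dualAnnihilator ⊔ (H.WV (-2)).dualAnnihilator) = ⊤ := by
      rw [← Subspace.dualAnnihilator_inf_eq, hFW, Submodule.dualAnnihilator_bot]
    rw [h.F_eq (zero_add 0), h.WV_eq (w' := -2) (by norm_num)]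
    refine (Submodule.comap_sup_of_injective h.bijective_left_V.injective ?_ ?_).symm.trans ?_
    · rw [LinearMap.range_eq_top.2 h.bijective_left_V.surjective]; exact le_top
    · rw [LinearMap.range_eq_top.2 h.bijective_left_V.surjective]; exact le_top
    · rw [htop, Submodule.comap_top]

theorem isHHom {H' K' : HPre} {p' : K'.HZ →ₗ[ℤ] H'.HZ →ₗ[ℤ] ℤ} {q' : K'.HV →ₗ[ℂ] H'.HV →ₗ[ℂ] ℂ}
    [Module.Finite ℤ H.HZ] [Module.Free ℤ H.HZ]
    (h : IsTwistedDual H K p q) (h' : IsTwistedDual H' K' p' q')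
    {fZ : H.HZ →ₗ[ℤ] H'.HZ} {fV : H.HV →ₗ[ℂ] H'.HV} (hf : IsHHom H H' fZ fV)
    {gZ : K'.HZ →ₗ[ℤ] K.HZ} {gV : K'.HV →ₗ[ℂ] K.HV}
    (hZ : ∀ y x, p (gZ y) x = p' y (fZ x)) (hV : ∀ φ v, q (gV φ) v = q' φ (fV v)) :
    IsHHom K' K gZ gV := by
  obtain ⟨hWQ, hWV, hF, ha, hb⟩ := hf
  have hA (A : Type) [CommRing A] (y x) : pairBaseChange A p (gZ.baseChange A y) x =
      pairBaseChange A p' y (fZ.baseChange A x) := by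
    have : pairBaseChange A p ∘ₗ gZ.baseChange A =
        (pairBaseChange A p').compl₂ (fZ.baseChange A) := by
      ext y x
      simp [hZ]
    exact LinearMap.congr_fun (LinearMap.congr_fun this y) x
  refine ⟨fun w => ?_, fun w => ?_, fun i => ?_, ?_, ?_⟩
  · rintro _ ⟨y, hy, rfl⟩
    rw [h.mem_WQ_iff (add_sub_cancel _ _)]
    intro x hx
    rw [hA]
    exact (h'.mem_WQ_iff (add_sub_cancel _ _) y).1 hy _ (hWQ _ (Submodule.mem_map_of_mem hx))
  · rintro _ ⟨y, hy, rfl⟩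
    rw [h.mem_WV_iff (add_sub_cancel _ _)]
    intro x hx
    rw [hV]
    exact (h'.mem_WV_iff (add_sub_cancel _ _) y).1 hy _ (hWV _ (Submodule.mem_map_of_mem hx))
  · rintro _ ⟨y, hy, rfl⟩
    rw [h.mem_F_iff (add_neg_cancel _)]
    intro x hx
    rw [hV]
    exact (h'.mem_F_iff (add_neg_cancel _) y).1 hy _ (hF _ (Submodule.mem_map_of_mem hx))
  · refine LinearMap.ext fun y => h.bijective_left_V.injective (LinearMap.ext fun v => ?_)
    rw [LinearMap.comp_apply, LinearMap.comp_apply, hV, h'.pair_a, h.pair_a, hA]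
    exact congrArg _ (LinearMap.congr_fun hb v)
  · refine LinearMap.ext fun φ =>
      (pairBaseChange_bijective ℂ h.bijective_left).injective (LinearMap.ext fun x => ?_)
    rw [LinearMap.comp_apply, LinearMap.comp_apply, hA, h.pair_b, h'.pair_b, hV]
    exact congrArg _ (LinearMap.congr_fun ha x)

end IsTwistedDual

theorem IsHHom.id (H : HPre) : IsHHom H H LinearMap.id LinearMap.id := by
  refine ⟨fun w => ?_, fun w => ?_, fun p => ?_, ?_, ?_⟩ <;> simp

theorem isTwistedDual_DFun (H : HPre) [Module.Finite ℤ H.HZ] [Module.Free ℤ H.HZ]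
    [FiniteDimensional ℂ H.HV]
    {b' : Module.Dual ℂ H.HV →ₗ[ℂ] ℂ ⊗[ℤ] Module.Dual ℤ H.HZ} (hb' : IsDualB H b') :
    IsTwistedDual H (DFun H b') LinearMap.id LinearMap.id := by
  have hp (A : Type) [CommRing A] :
      pairBaseChange A (LinearMap.id : Module.Dual ℤ H.HZ →ₗ[ℤ] _) = dualBaseChange A H.HZ := by
    ext
    simp
  exact
  { bijective_left := Function.bijective_id
    bijective_right := Module.bijective_dual_eval ℤ H.HZ
    bijective_left_V := Function.bijective_id
    bijective_right_V := Module.bijective_dual_eval ℂ H.HV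
    mem_WQ_iff := by
      intro w w' hw y
      obtain rfl : w' = -(w + 2) - 1 := by omega
      rw [← Submodule.mem_dualAnnihilator]
      change _ ↔ pairBaseChange ℚ (LinearMap.id : Module.Dual ℤ H.HZ →ₗ[ℤ] _) y ∈ _
      rw [hp]
      rfl
    mem_WV_iff := by
      intro w w' hw y
      obtain rfl : w' = -(w + 2) - 1 := by omega
      exact Submodule.mem_dualAnnihilator _
    mem_F_iff := by
      intro i j hij y
      obtain rfl : j = 1 - (i + 1) := by omega
      exact Submodule.mem_dualAnnihilator _
    pair_a := fun y v => by
      change _ = pairBaseChange ℂ (LinearMap.id : Module.Dual ℤ H.HZ →ₗ[ℤ] _) y (H.b v)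
      rw [hp]
      rfl
    pair_b := fun φ x => by
      change pairBaseChange ℂ (LinearMap.id : Module.Dual ℤ H.HZ →ₗ[ℤ] _) (b' φ) x = _
      rw [hp]
      exact LinearMap.congr_fun (LinearMap.congr_fun hb' φ) x }

theorem IsHObj.finite_and_free {H : HPre} (hH : IsHObj H) (htf : NoZeroSMulDivisors ℤ H.HZ) :
    Module.Finite ℤ H.HZ ∧ Module.Free ℤ H.HZ ∧ FiniteDimensional ℂ H.HV :=
  have := hH.1
  ⟨hH.1, inferInstance, hH.2.1⟩

theorem finite_and_free_of_isH1 {H : HPre} (hH : IsH1ZeroNegOne H ∨ IsH1NegOneNegTwo H) :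
    Module.Finite ℤ H.HZ ∧ Module.Free ℤ H.HZ ∧ FiniteDimensional ℂ H.HV :=
  hH.elim (fun h => h.1.finite_and_free h.2.1) (fun h => h.1.finite_and_free h.2.1)

end WeightHodge

/-!
STATEMENT 1: `D = Hom(−, ℤ)(1)` interchanges `𝓗_{1,{0,−1}}` and `𝓗_{1,{−1,−2}}`, and
`D ∘ D` is naturally isomorphic to the identity; hence `D` induces an anti-equivalence
between these two categories.
-/

theorem D_anti_equivalence :
    -- `D` sends every object of `𝓗_{1,{0,−1}}` to an object of `𝓗_{1,{−1,−2}}`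
    (∀ (H : HPre) b', IsH1ZeroNegOne H → IsDualB H b' →
      IsH1NegOneNegTwo (DFun H b')) ∧
    -- `D` sends every object of `𝓗_{1,{−1,−2}}` to an object of `𝓗_{1,{0,−1}}`
    (∀ (H : HPre) b', IsH1NegOneNegTwo H → IsDualB H b' →
      IsH1ZeroNegOne (DFun H b')) ∧
    -- `D` sends morphisms to morphisms, contravariantly
    (∀ (H H' : HPre) b₁ b₂,
      (IsH1ZeroNegOne H ∧ IsH1ZeroNegOne H') ∨ (IsH1NegOneNegTwo H ∧ IsH1NegOneNegTwo H') →
      IsDualB H b₁ → IsDualB H' b₂ →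
      ∀ (fZ : H.HZ →ₗ[ℤ] H'.HZ) (fV : H.HV →ₗ[ℂ] H'.HV), IsHHom H H' fZ fV →
        IsHHom (DFun H' b₂) (DFun H b₁) fZ.dualMap fV.dualMap) ∧
    -- `D ∘ D` is isomorphic to the identity via the canonical evaluation maps ...
    (∀ (H : HPre) b₁ b₂, IsH1ZeroNegOne H ∨ IsH1NegOneNegTwo H →
      IsDualB H b₁ → IsDualB (DFun H b₁) b₂ →
      IsHHom H (DFun (DFun H b₁) b₂)
        (Module.Dual.eval ℤ H.HZ) (Module.Dual.eval ℂ H.HV) ∧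
      ∃ (gZ : (DFun (DFun H b₁) b₂).HZ →ₗ[ℤ] H.HZ)
        (gV : (DFun (DFun H b₁) b₂).HV →ₗ[ℂ] H.HV),
        IsHHom (DFun (DFun H b₁) b₂) H gZ gV ∧
        gZ ∘ₗ Module.Dual.eval ℤ H.HZ = LinearMap.id ∧
        Module.Dual.eval ℤ H.HZ ∘ₗ gZ = LinearMap.id ∧
        gV ∘ₗ Module.Dual.eval ℂ H.HV = LinearMap.id ∧
        Module.Dual.eval ℂ H.HV ∘ₗ gV = LinearMap.id) ∧
    -- ... naturally in `H`
    (∀ (H H' : HPre) (fZ : H.HZ →ₗ[ℤ] H'.HZ) (fV : H.HV →ₗ[ℂ] H'.HV),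
      fZ.dualMap.dualMap ∘ₗ Module.Dual.eval ℤ H.HZ = Module.Dual.eval ℤ H'.HZ ∘ₗ fZ ∧
      fV.dualMap.dualMap ∘ₗ Module.Dual.eval ℂ H.HV = Module.Dual.eval ℂ H'.HV ∘ₗ fV) := by
  refine ⟨fun H b' hH hb' => ?_, fun H b' hH hb' => ?_,
    fun H H' b₁ b₂ hHH' hb₁ hb₂ fZ fV hf => ?_, fun H b₁ b₂ hH hb₁ hb₂ => ?_,
    fun H H' fZ fV => ⟨rfl, rfl⟩⟩
  · obtain ⟨_, _, _⟩ := finite_and_free_of_isH1 (Or.inl hH)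
    exact (isTwistedDual_DFun H hb').isH1NegOneNegTwo hH
  · obtain ⟨_, _, _⟩ := finite_and_free_of_isH1 (Or.inr hH)
    exact (isTwistedDual_DFun H hb').isH1ZeroNegOne hH
  · obtain ⟨_, _, _⟩ := finite_and_free_of_isH1 (hHH'.imp And.left And.left)
    obtain ⟨_, _, _⟩ := finite_and_free_of_isH1 (hHH'.imp And.right And.right)
    exact (isTwistedDual_DFun H hb₁).isHHom (isTwistedDual_DFun H' hb₂) hf
      (fun _ _ => rfl) (fun _ _ => rfl)
  · obtain ⟨_, _, _⟩ := finite_and_free_of_isH1 hH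
    have h₁ := isTwistedDual_DFun H hb₁
    have hK := hH.symm.imp h₁.isH1ZeroNegOne h₁.isH1NegOneNegTwo
    obtain ⟨_, _, _⟩ := finite_and_free_of_isH1 hK
    have h₂ := isTwistedDual_DFun (DFun H b₁) hb₂
    have hid := IsHHom.id (DFun H b₁)
    let eZ := Module.evalEquiv ℤ H.HZ
    let eV := Module.evalEquiv ℂ H.HV
    refine ⟨h₂.isHHom h₁.symm hid (fun _ _ => rfl) (fun _ _ => rfl), eZ.symm.toLinearMap,
      eV.symm.toLinearMap, h₁.symm.isHHom h₂ hid (fun θ y => ?_) (fun θ φ => ?_),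
      LinearMap.ext eZ.symm_apply_apply, LinearMap.ext eZ.apply_symm_apply,
      LinearMap.ext eV.symm_apply_apply, LinearMap.ext eV.apply_symm_apply⟩
    · exact LinearMap.congr_fun (eZ.apply_symm_apply θ) y
    · exact LinearMap.congr_fun (eV.apply_symm_apply θ) φ
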